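/- Let Γ^a_{bc} be a torsion-free affine connection on an open set U ⊆ ℝⁿ and let σ^{ab} be a symmetric C¹ tensor field satisfying the metrisability equations ∇_a σ^{bc} = δ^b_a μ^c + δ^c_a μ^b for some vector field μ. For any two C¹ 1-forms Ω¹, Ω² on U define the vector fields V_i^a = σ^{ab} Ω^i_b (i = 1, 2). Then at every point p ∈ U the Lie bracket [V₁, V₂]^c = V₁^a ∂_a V₂^c − V₂^a ∂_a V₁^c lies in the image of the linear map σ(p); explicitly [V₁,V₂]^c = 2σ^{cb}(Ω^{[1}_b Ω^{2]}_d μ^d + σ^{ae} Ω^{[1}_e ∇_a Ω^{2]}_b), where square brackets denote antisymmetrisation (with factor ½) over the labels 1, 2. Hence the distribution defined by the image of σ is involutive. -/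

import Mathlib

/-- Partial derivative `∂_i f` on `ℝⁿ` (points as `Fin n → ℝ`). -/
noncomputable def pdv {n : ℕ} (i : Fin n) (f : (Fin n → ℝ) → ℝ) (x : Fin n → ℝ) : ℝ :=
  fderiv ℝ f x (Pi.single i 1)

/-- Covariant derivative `∇_a σ^{bc}` of a `(2,0)`-tensor. -/
noncomputable def covUp {n : ℕ} (Γ : Fin n → Fin n → Fin n → (Fin n → ℝ) → ℝ)
    (σ : Fin n → Fin n → (Fin n → ℝ) → ℝ) (a b c : Fin n) (x : Fin n → ℝ) : ℝ :=
  pdv a (σ b c) x + ∑ d, Γ b a d x * σ d c x + ∑ d, Γ c a d x * σ b d x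

/-- Covariant derivative `∇_a ω_b` of a 1-form. -/
noncomputable def covForm {n : ℕ} (Γ : Fin n → Fin n → Fin n → (Fin n → ℝ) → ℝ)
    (ω : Fin n → (Fin n → ℝ) → ℝ) (a b : Fin n) (x : Fin n → ℝ) : ℝ :=
  pdv a (ω b) x - ∑ c, Γ c a b x * ω c x

/-- The `c`-component of the Lie bracket `[V₁, V₂]` of `V_i^a = σ^{ab} Ω^i_b`. -/
noncomputable def lieBr {n : ℕ} (σ : Fin n → Fin n → (Fin n → ℝ) → ℝ)
    (Ω1 Ω2 : Fin n → (Fin n → ℝ) → ℝ) (c : Fin n) (x : Fin n → ℝ) : ℝ :=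
  (∑ a, (∑ b, σ a b x * Ω1 b x) * pdv a (fun y => ∑ b, σ c b y * Ω2 b y) x)
    - ∑ a, (∑ b, σ a b x * Ω2 b x) * pdv a (fun y => ∑ b, σ c b y * Ω1 b y) x

/-!
Since `∇` is torsion-free, `[V, W]^c = V^a ∇_a W^c − W^a ∇_a V^c`. For `W^c = σ^{cb} Ω_b`, the Leibniz
rule and the metrisability equations give
`V^a ∇_a W^c = V^c (Ω_d μ^d) + μ^c (V^a Ω_a) + σ^{cb} V^a ∇_a Ω_b`.
The first and last terms lie in the image of `σ` when `V` does, and the middle one, with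
`V^a = σ^{ae} Ω'_e`, is symmetric in `Ω` and `Ω'`, so it drops out of the bracket.
-/

section PartialDerivative

variable {n : ℕ} {x : Fin n → ℝ}

theorem pdv_mul {f g : (Fin n → ℝ) → ℝ} (i : Fin n) (hf : DifferentiableAt ℝ f x)
    (hg : DifferentiableAt ℝ g x) :
    pdv i (fun y => f y * g y) x = pdv i f x * g x + f x * pdv i g x := by
  simp only [pdv, fderiv_fun_mul hf hg, add_apply, smul_apply, smul_eq_mul]
  ring

theorem pdv_sum {ι : Type*} (s : Finset ι) {f : ι → (Fin n → ℝ) → ℝ} (i : Fin n)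
    (hf : ∀ j ∈ s, DifferentiableAt ℝ (f j) x) :
    pdv i (fun y => ∑ j ∈ s, f j y) x = ∑ j ∈ s, pdv i (f j) x := by
  simp only [pdv, fderiv_fun_sum hf, sum_apply]

end PartialDerivative

/-- Covariant derivative `∇_a V^c` of a vector field. -/
noncomputable def covVec {n : ℕ} (Γ : Fin n → Fin n → Fin n → (Fin n → ℝ) → ℝ)
    (V : Fin n → (Fin n → ℝ) → ℝ) (a c : Fin n) (x : Fin n → ℝ) : ℝ :=
  pdv a (V c) x + ∑ d, Γ c a d x * V d x

/-- The vector field `V^c = σ^{cb} Ω_b` obtained by raising the index of a 1-form with a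
`(2,0)`-tensor; such fields take values in the image of `σ`. -/
def raiseIndex {n : ℕ} (σ : Fin n → Fin n → (Fin n → ℝ) → ℝ) (Ω : Fin n → (Fin n → ℝ) → ℝ)
    (c : Fin n) (x : Fin n → ℝ) : ℝ :=
  ∑ b, σ c b x * Ω b x

/-- The metrisability equations `∇_a σ^{bc} = δ^b_a μ^c + δ^c_a μ^b` at the point `x`. -/
def MetrisableAt {n : ℕ} (Γ : Fin n → Fin n → Fin n → (Fin n → ℝ) → ℝ)
    (σ : Fin n → Fin n → (Fin n → ℝ) → ℝ) (μ : Fin n → (Fin n → ℝ) → ℝ) (x : Fin n → ℝ) : Prop :=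
  ∀ a b c, covUp Γ σ a b c x = (if b = a then μ c x else 0) + (if c = a then μ b x else 0)

/-- The 1-form `ω_b = 2(Ω^{[1}_b Ω^{2]}_d μ^d + σ^{ae} Ω^{[1}_e ∇_a Ω^{2]}_b)`, which `σ`
raises to `[V₁, V₂]`. The antisymmetrisations are expanded, so the factors `2` and `½` cancel. -/
noncomputable def bracketForm {n : ℕ} (Γ : Fin n → Fin n → Fin n → (Fin n → ℝ) → ℝ)
    (σ : Fin n → Fin n → (Fin n → ℝ) → ℝ) (μ Ω1 Ω2 : Fin n → (Fin n → ℝ) → ℝ)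
    (b : Fin n) (x : Fin n → ℝ) : ℝ :=
  (Ω1 b x * (∑ d, Ω2 d x * μ d x) - Ω2 b x * (∑ d, Ω1 d x * μ d x))
    + ((∑ a, raiseIndex σ Ω1 a x * covForm Γ Ω2 a b x)
      - ∑ a, raiseIndex σ Ω2 a x * covForm Γ Ω1 a b x)

section Metrisability

variable {n : ℕ} {Γ : Fin n → Fin n → Fin n → (Fin n → ℝ) → ℝ}
  {σ : Fin n → Fin n → (Fin n → ℝ) → ℝ} {μ Ω Ω1 Ω2 : Fin n → (Fin n → ℝ) → ℝ} {x : Fin n → ℝ}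

theorem sum_mul_pdv_sub_eq_sum_mul_covVec_sub {c : Fin n} (hΓ : ∀ a d, Γ c a d x = Γ c d a x)
    (V W : Fin n → (Fin n → ℝ) → ℝ) :
    (∑ a, V a x * pdv a (W c) x) - ∑ a, W a x * pdv a (V c) x
      = (∑ a, V a x * covVec Γ W a c x) - ∑ a, W a x * covVec Γ V a c x := by
  have christoffel_symm : ∑ a, V a x * ∑ d, Γ c a d x * W d x
      = ∑ a, W a x * ∑ d, Γ c a d x * V d x := by
    simp only [Finset.mul_sum]
    rw [Finset.sum_comm]
    refine Finset.sum_congr rfl fun a _ => Finset.sum_congr rfl fun d _ => ?_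
    rw [hΓ d a]
    ring
  simp only [covVec, mul_add, Finset.sum_add_distrib, christoffel_symm]
  ring

theorem pdv_raiseIndex (hσ : ∀ a b, DifferentiableAt ℝ (σ a b) x)
    (hΩ : ∀ b, DifferentiableAt ℝ (Ω b) x) (a c : Fin n) :
    pdv a (raiseIndex σ Ω c) x
      = (∑ b, pdv a (σ c b) x * Ω b x) + ∑ b, σ c b x * pdv a (Ω b) x := by
  unfold raiseIndex
  rw [pdv_sum _ a fun b _ => (hσ c b).fun_mul (hΩ b), ← Finset.sum_add_distrib]
  exact Finset.sum_congr rfl fun b _ => pdv_mul a (hσ c b) (hΩ b)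

theorem covVec_raiseIndex (hσ : ∀ a b, DifferentiableAt ℝ (σ a b) x)
    (hΩ : ∀ b, DifferentiableAt ℝ (Ω b) x) (a c : Fin n) :
    covVec Γ (raiseIndex σ Ω) a c x
      = (∑ b, covUp Γ σ a c b x * Ω b x) + ∑ b, σ c b x * covForm Γ Ω a b x := by
  have upper_index : ∑ d, Γ c a d x * raiseIndex σ Ω d x
      = ∑ b, (∑ d, Γ c a d x * σ d b x) * Ω b x := by
    simp only [raiseIndex, Finset.mul_sum, Finset.sum_mul, mul_assoc]
    exact Finset.sum_comm
  have contracted_index : ∑ b, (∑ d, Γ b a d x * σ c d x) * Ω b x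
      = ∑ b, σ c b x * ∑ d, Γ d a b x * Ω d x := by
    simp only [Finset.mul_sum, Finset.sum_mul]
    rw [Finset.sum_comm]
    exact Finset.sum_congr rfl fun d _ => Finset.sum_congr rfl fun b _ => by ring
  simp only [covVec, pdv_raiseIndex hσ hΩ, upper_index, covUp, covForm, add_mul, mul_sub,
    Finset.sum_add_distrib, Finset.sum_sub_distrib, contracted_index]
  ring

theorem MetrisableAt.covVec_raiseIndex_eq (h : MetrisableAt Γ σ μ x)
    (hσ : ∀ a b, DifferentiableAt ℝ (σ a b) x) (hΩ : ∀ b, DifferentiableAt ℝ (Ω b) x)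
    (a c : Fin n) :
    covVec Γ (raiseIndex σ Ω) a c x
      = (if c = a then ∑ d, Ω d x * μ d x else 0) + μ c x * Ω a x
        + ∑ b, σ c b x * covForm Γ Ω a b x := by
  have trace_term : ∑ b, (if c = a then μ b x else 0) * Ω b x
      = if c = a then ∑ d, Ω d x * μ d x else 0 := by
    split_ifs <;> simp [mul_comm]
  have diagonal_term : ∑ b, (if b = a then μ c x else 0) * Ω b x = μ c x * Ω a x := by
    simp
  simp only [covVec_raiseIndex hσ hΩ, h a c, add_mul, Finset.sum_add_distrib, trace_term,
    diagonal_term]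

theorem MetrisableAt.sum_mul_covVec_raiseIndex (h : MetrisableAt Γ σ μ x)
    (hσ : ∀ a b, DifferentiableAt ℝ (σ a b) x) (hΩ : ∀ b, DifferentiableAt ℝ (Ω b) x)
    (v : Fin n → ℝ) (c : Fin n) :
    ∑ a, v a * covVec Γ (raiseIndex σ Ω) a c x
      = v c * (∑ d, Ω d x * μ d x) + μ c x * (∑ a, v a * Ω a x)
        + ∑ b, σ c b x * ∑ a, v a * covForm Γ Ω a b x := by
  have form_term : ∑ a, v a * ∑ b, σ c b x * covForm Γ Ω a b x
      = ∑ b, σ c b x * ∑ a, v a * covForm Γ Ω a b x := by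
    simp only [Finset.mul_sum, mul_left_comm (v _)]
    exact Finset.sum_comm
  simp only [h.covVec_raiseIndex_eq hσ hΩ, mul_add, Finset.sum_add_distrib, form_term, mul_ite,
    mul_zero, Finset.sum_ite_eq, Finset.mem_univ, if_true, mul_left_comm (v _) (μ c x),
    ← Finset.mul_sum]

theorem sum_raiseIndex_mul_comm (hσ : ∀ a b, σ a b x = σ b a x)
    (Ω1 Ω2 : Fin n → (Fin n → ℝ) → ℝ) :
    ∑ a, raiseIndex σ Ω1 a x * Ω2 a x = ∑ a, raiseIndex σ Ω2 a x * Ω1 a x := by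
  simp only [raiseIndex, Finset.sum_mul]
  rw [Finset.sum_comm]
  refine Finset.sum_congr rfl fun a _ => Finset.sum_congr rfl fun b _ => ?_
  rw [hσ b a]
  ring

theorem sum_mul_bracketForm (c : Fin n) :
    ∑ b, σ c b x * bracketForm Γ σ μ Ω1 Ω2 b x
      = (raiseIndex σ Ω1 c x * (∑ d, Ω2 d x * μ d x)
          - raiseIndex σ Ω2 c x * (∑ d, Ω1 d x * μ d x))
        + ((∑ b, σ c b x * ∑ a, raiseIndex σ Ω1 a x * covForm Γ Ω2 a b x)
          - ∑ b, σ c b x * ∑ a, raiseIndex σ Ω2 a x * covForm Γ Ω1 a b x) := by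
  simp only [bracketForm, raiseIndex.eq_def σ _ c, mul_add, mul_sub, Finset.sum_add_distrib,
    Finset.sum_sub_distrib, ← mul_assoc, ← Finset.sum_mul]

theorem MetrisableAt.lieBr_eq_sum_mul_bracketForm (h : MetrisableAt Γ σ μ x)
    (hΓsym : ∀ a b c, Γ a b c x = Γ a c b x) (hσsym : ∀ a b, σ a b x = σ b a x)
    (hσ : ∀ a b, DifferentiableAt ℝ (σ a b) x) (hΩ1 : ∀ b, DifferentiableAt ℝ (Ω1 b) x)
    (hΩ2 : ∀ b, DifferentiableAt ℝ (Ω2 b) x) (c : Fin n) :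
    lieBr σ Ω1 Ω2 c x = ∑ b, σ c b x * bracketForm Γ σ μ Ω1 Ω2 b x :=
  calc lieBr σ Ω1 Ω2 c x
      = (∑ a, raiseIndex σ Ω1 a x * covVec Γ (raiseIndex σ Ω2) a c x)
          - ∑ a, raiseIndex σ Ω2 a x * covVec Γ (raiseIndex σ Ω1) a c x :=
        sum_mul_pdv_sub_eq_sum_mul_covVec_sub (hΓsym c) (raiseIndex σ Ω1) (raiseIndex σ Ω2)
    _ = ∑ b, σ c b x * bracketForm Γ σ μ Ω1 Ω2 b x := by
        rw [h.sum_mul_covVec_raiseIndex hσ hΩ2, h.sum_mul_covVec_raiseIndex hσ hΩ1,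
          sum_raiseIndex_mul_comm hσsym Ω1 Ω2, sum_mul_bracketForm]
        ring

theorem bracketForm_eq_two_mul (b : Fin n) :
    bracketForm Γ σ μ Ω1 Ω2 b x
      = 2 * ((1 / 2) * (Ω1 b x * (∑ d, Ω2 d x * μ d x) - Ω2 b x * (∑ d, Ω1 d x * μ d x))
          + ∑ a, ∑ e, σ a e x *
              ((1 / 2) * (Ω1 e x * covForm Γ Ω2 a b x - Ω2 e x * covForm Γ Ω1 a b x))) := by
  have contraction : ∀ a, ∑ e, σ a e x *
      ((1 / 2) * (Ω1 e x * covForm Γ Ω2 a b x - Ω2 e x * covForm Γ Ω1 a b x))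
        = (1 / 2) * (raiseIndex σ Ω1 a x * covForm Γ Ω2 a b x
          - raiseIndex σ Ω2 a x * covForm Γ Ω1 a b x) := fun a => by
    simp only [raiseIndex, Finset.sum_mul, ← Finset.sum_sub_distrib, Finset.mul_sum]
    exact Finset.sum_congr rfl fun e _ => by ring
  simp only [bracketForm, contraction, ← Finset.mul_sum, Finset.sum_sub_distrib]
  ring

end Metrisability

theorem image_of_metrisability_solution_involutive_general {n : ℕ} {x : Fin n → ℝ}
    {Γ : Fin n → Fin n → Fin n → (Fin n → ℝ) → ℝ} {σ : Fin n → Fin n → (Fin n → ℝ) → ℝ}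
    {μ Ω1 Ω2 : Fin n → (Fin n → ℝ) → ℝ}
    (hΓsym : ∀ a b c, Γ a b c x = Γ a c b x) (hσsym : ∀ a b, σ a b x = σ b a x)
    (hσ : ∀ a b, DifferentiableAt ℝ (σ a b) x) (hmet : MetrisableAt Γ σ μ x)
    (hΩ1 : ∀ b, DifferentiableAt ℝ (Ω1 b) x) (hΩ2 : ∀ b, DifferentiableAt ℝ (Ω2 b) x) :
    (∀ c : Fin n,
        lieBr σ Ω1 Ω2 c x
          = 2 * ∑ b, σ c b x *
              ((1 / 2) * (Ω1 b x * (∑ d, Ω2 d x * μ d x)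
                  - Ω2 b x * (∑ d, Ω1 d x * μ d x))
                + ∑ a, ∑ e, σ a e x *
                    ((1 / 2) * (Ω1 e x * covForm Γ Ω2 a b x
                      - Ω2 e x * covForm Γ Ω1 a b x))))
      ∧ ∃ w : Fin n → ℝ, ∀ c : Fin n, lieBr σ Ω1 Ω2 c x = ∑ b, σ c b x * w b := by
  have lieBr_eq := hmet.lieBr_eq_sum_mul_bracketForm hΓsym hσsym hσ hΩ1 hΩ2
  refine ⟨fun c => ?_, fun b => bracketForm Γ σ μ Ω1 Ω2 b x, lieBr_eq⟩
  simp only [lieBr_eq c, bracketForm_eq_two_mul, mul_left_comm (σ _ _ _) 2, ← Finset.mul_sum]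

/-- For a solution of the metrisability equations, the Lie bracket of two vector
fields in the image of `σ` lies in the image of `σ`, with the explicit formula
`[V₁,V₂]^c = 2σ^{cb}(Ω^{[1}_b Ω^{2]}_d μ^d + σ^{ae} Ω^{[1}_e ∇_a Ω^{2]}_b)`;
hence the distribution defined by the image of `σ` is involutive. -/
theorem image_of_metrisability_solution_involutive
    (n : ℕ) (U : Set (Fin n → ℝ)) (hU : IsOpen U)
    (Γ : Fin n → Fin n → Fin n → (Fin n → ℝ) → ℝ)
    (hΓsym : ∀ a b c x, Γ a b c x = Γ a c b x)
    (hΓC1 : ∀ a b c, ContDiffOn ℝ 1 (Γ a b c) U)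
    (σ : Fin n → Fin n → (Fin n → ℝ) → ℝ)
    (hσsym : ∀ a b x, σ a b x = σ b a x)
    (hσC1 : ∀ a b, ContDiffOn ℝ 1 (σ a b) U)
    (μ : Fin n → (Fin n → ℝ) → ℝ)
    (hmet : ∀ a b c : Fin n, ∀ x ∈ U,
      covUp Γ σ a b c x
        = (if b = a then μ c x else 0) + (if c = a then μ b x else 0))
    (Ω1 Ω2 : Fin n → (Fin n → ℝ) → ℝ)
    (hΩ1 : ∀ b, ContDiffOn ℝ 1 (Ω1 b) U)
    (hΩ2 : ∀ b, ContDiffOn ℝ 1 (Ω2 b) U) :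
    ∀ x ∈ U,
      (∀ c : Fin n,
        lieBr σ Ω1 Ω2 c x
          = 2 * ∑ b, σ c b x *
              ((1 / 2) * (Ω1 b x * (∑ d, Ω2 d x * μ d x)
                  - Ω2 b x * (∑ d, Ω1 d x * μ d x))
                + ∑ a, ∑ e, σ a e x *
                    ((1 / 2) * (Ω1 e x * covForm Γ Ω2 a b x
                      - Ω2 e x * covForm Γ Ω1 a b x))))
      ∧ ∃ w : Fin n → ℝ, ∀ c : Fin n,
          lieBr σ Ω1 Ω2 c x = ∑ b, σ c b x * w b := by
  intro x hx
  have differentiableAt {f : (Fin n → ℝ) → ℝ} (hf : ContDiffOn ℝ 1 f U) : DifferentiableAt ℝ f x :=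
    (hf.contDiffAt (hU.mem_nhds hx)).differentiableAt one_ne_zero
  exact image_of_metrisability_solution_involutive_general (hΓsym · · · x) (hσsym · · x)
    (fun a b => differentiableAt (hσC1 a b)) (hmet · · · x hx)
    (fun b => differentiableAt (hΩ1 b)) (fun b => differentiableAt (hΩ2 b))
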